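/- arXiv:2511.22530 — 6 statements merged into one kernel-verified Lean document; each statement's English description precedes it below -/
import Mathlib

section
/- Let Ω ⊆ ℝ³ be open with topological boundary ∂Ω, let ρ₀, c₀, φ₀ : ℝ³ → ℝ with ρ₀ differentiable and strictly positive on Ω ∪ ∂Ω, c₀ ≠ 0 on Ω ∪ ∂Ω, φ₀ differentiable, and let ω > 0, γ ≥ 0 be real and f : ℝ³ → ℂ. Let ξ : ℝ³ → ℂ³ and δp : ℝ³ → ℂ be differentiable on Ω, and set u_L := √ρ₀ ξ and w_L := δp/√ρ₀. Then the following are equivalent: (a) at every x ∈ Ω, ρ₀ [ (−ω² − 2iωγ) ξ + ((α_ρ − ∇φ₀/c₀²)·ξ) ∇φ₀ ] + (δp/c₀²) ∇φ₀ + ∇δp = 0 and δp/(ρ₀ c₀²) − (ξ·∇φ₀)/c₀² + div ξ = f, and at every x ∈ ∂Ω, δp − ρ₀ (ξ·∇φ₀) = 0; (b) at every x ∈ Ω, (−ω² − 2iωγ) u_L + ((α_ρ − ∇φ₀/c₀²)·u_L) ∇φ₀ + (∇φ₀/c₀² − α_ρ/2) w_L + ∇w_L = 0 and w_L/c₀²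 + u_L·(−∇φ₀/c₀² + α_ρ/2) + div u_L = √ρ₀ f, and at every x ∈ ∂Ω, w_L − u_L·∇φ₀ = 0. Here α_ρ = −∇ρ₀/ρ₀. -/
/-- Gradient of a complex-valued function on ℝ³: vector of partial derivatives. -/
noncomputable def grad (g : (Fin 3 → ℝ) → ℂ) (x : Fin 3 → ℝ) : Fin 3 → ℂ :=
  fun i => fderiv ℝ g x (Pi.single i 1)

/-- Gradient of a real-valued function on ℝ³: vector of partial derivatives. -/
noncomputable def gradR (g : (Fin 3 → ℝ) → ℝ) (x : Fin 3 → ℝ) : Fin 3 → ℝ :=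
  fun i => fderiv ℝ g x (Pi.single i 1)

/-- Divergence of a ℂ³-valued field on ℝ³: sum of the partial derivatives of its components. -/
noncomputable def divC (u : (Fin 3 → ℝ) → Fin 3 → ℂ) (x : Fin 3 → ℝ) : ℂ :=
  ∑ i, fderiv ℝ (fun y => u y i) x (Pi.single i 1)

/-- Inverse density scale-height vector `α_ρ = -∇ρ/ρ`. -/
noncomputable def alphaRho (ρ : (Fin 3 → ℝ) → ℝ) (x : Fin 3 → ℝ) : Fin 3 → ℝ :=
  fun i => -(gradR ρ x i) / ρ x

theorem sqrt_hasFDerivAt_aux (ρ : (Fin 3 → ℝ) → ℝ) (x : Fin 3 → ℝ)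
    (hd : DifferentiableAt ℝ ρ x) (hp : 0 < ρ x) :
    HasFDerivAt (fun y => (Real.sqrt (ρ y) : ℂ))
      (Complex.ofRealCLM.comp ((1 / (2 * Real.sqrt (ρ x))) • fderiv ℝ ρ x)) x :=
  Complex.ofRealCLM.hasFDerivAt.comp x (hd.hasFDerivAt.sqrt hp.ne')

theorem grad_mul_aux (ρ : (Fin 3 → ℝ) → ℝ) (x : Fin 3 → ℝ)
    (hd : DifferentiableAt ℝ ρ x) (hp : 0 < ρ x) (g : (Fin 3 → ℝ) → ℂ)
    (hg : DifferentiableAt ℝ g x) (v : Fin 3 → ℝ) :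
    fderiv ℝ (fun y => (Real.sqrt (ρ y) : ℂ) * g y) x v
      = (Real.sqrt (ρ x) : ℂ) * fderiv ℝ g x v
        + (fderiv ℝ ρ x v : ℂ) / (2 * (Real.sqrt (ρ x) : ℂ)) * g x := by
  have h := (sqrt_hasFDerivAt_aux ρ x hd hp).mul hg.hasFDerivAt
  have h2 := h.fderiv
  have h3 : fderiv ℝ (fun y => (Real.sqrt (ρ y) : ℂ) * g y) x v = _ :=
    congrArg (fun L : (Fin 3 → ℝ) →L[ℝ] ℂ => L v) h2
  rw [h3]
  simp
  ring

theorem grad_div_aux (ρ : (Fin 3 → ℝ) → ℝ) (x : Fin 3 → ℝ)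
    (hd : DifferentiableAt ℝ ρ x) (hp : 0 < ρ x) (g : (Fin 3 → ℝ) → ℂ)
    (hg : DifferentiableAt ℝ g x) (v : Fin 3 → ℝ) :
    fderiv ℝ (fun y => g y / (Real.sqrt (ρ y) : ℂ)) x v
      = fderiv ℝ g x v / (Real.sqrt (ρ x) : ℂ)
        - (fderiv ℝ ρ x v : ℂ) / (2 * (Real.sqrt (ρ x) : ℂ) ^ 3) * g x := by
  have hs : (Real.sqrt (ρ x) : ℂ) ≠ 0 := by
    exact_mod_cast (Real.sqrt_pos.2 hp).ne'
  have hw : DifferentiableAt ℝ (fun y => g y / (Real.sqrt (ρ y) : ℂ)) x := by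
    simp only [div_eq_mul_inv]
    exact hg.mul ((sqrt_hasFDerivAt_aux ρ x hd hp).differentiableAt.inv hs)
  have h := grad_mul_aux ρ x hd hp _ hw v
  have he : (fun y => (Real.sqrt (ρ y) : ℂ) * (g y / (Real.sqrt (ρ y) : ℂ))) =ᶠ[nhds x] g := by
    filter_upwards [hd.continuousAt.eventually (lt_mem_nhds hp)] with y hy
    have : (Real.sqrt (ρ y) : ℂ) ≠ 0 := by
      exact_mod_cast (Real.sqrt_pos.2 hy).ne'
    field_simp
  rw [he.fderiv_eq] at h
  rw [h]
  field_simp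
  ring

theorem stmt5 (Ω : Set (Fin 3 → ℝ)) (hΩ : IsOpen Ω)
    (ρ₀ c₀ φ₀ : (Fin 3 → ℝ) → ℝ)
    (hρdiff : ∀ x ∈ Ω ∪ frontier Ω, DifferentiableAt ℝ ρ₀ x)
    (hρpos : ∀ x ∈ Ω ∪ frontier Ω, 0 < ρ₀ x)
    (hc : ∀ x ∈ Ω ∪ frontier Ω, c₀ x ≠ 0)
    (hφ : Differentiable ℝ φ₀)
    (ω γ : ℝ) (hω : 0 < ω) (hγ : 0 ≤ γ)
    (f : (Fin 3 → ℝ) → ℂ)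
    (ξ : (Fin 3 → ℝ) → Fin 3 → ℂ) (δp : (Fin 3 → ℝ) → ℂ)
    (hξ : ∀ x ∈ Ω, DifferentiableAt ℝ ξ x)
    (hδp : ∀ x ∈ Ω, DifferentiableAt ℝ δp x)
    (uL : (Fin 3 → ℝ) → Fin 3 → ℂ) (wL : (Fin 3 → ℝ) → ℂ)
    (huL : uL = fun y => fun i => (Real.sqrt (ρ₀ y) : ℂ) * ξ y i)
    (hwL : wL = fun y => δp y / (Real.sqrt (ρ₀ y) : ℂ)) :
    -- (a) original system with vacuum boundary condition
    ( (∀ x ∈ Ω,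
        (∀ i, (ρ₀ x : ℂ) *
            ( (-(ω : ℂ) ^ 2 - 2 * Complex.I * ω * γ) * ξ x i
              + (∑ j, ((alphaRho ρ₀ x j - gradR φ₀ x j / (c₀ x) ^ 2 : ℝ) : ℂ) * ξ x j)
                  * (gradR φ₀ x i : ℂ) )
          + (δp x / ((c₀ x) ^ 2 : ℂ)) * (gradR φ₀ x i : ℂ)
          + grad δp x i = 0)
        ∧ δp x / ((ρ₀ x : ℂ) * ((c₀ x) ^ 2 : ℂ))
            - (∑ j, (gradR φ₀ x j : ℂ) * ξ x j) / ((c₀ x) ^ 2 : ℂ)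
            + divC ξ x = f x)
      ∧ (∀ x ∈ frontier Ω,
          δp x - (ρ₀ x : ℂ) * ∑ j, (gradR φ₀ x j : ℂ) * ξ x j = 0) )
    ↔
    -- (b) Liouville system with its boundary condition
    ( (∀ x ∈ Ω,
        (∀ i, (-(ω : ℂ) ^ 2 - 2 * Complex.I * ω * γ) * uL x i
          + (∑ j, ((alphaRho ρ₀ x j - gradR φ₀ x j / (c₀ x) ^ 2 : ℝ) : ℂ) * uL x j)
              * (gradR φ₀ x i : ℂ)
          + ((gradR φ₀ x i / (c₀ x) ^ 2 - alphaRho ρ₀ x i / 2 : ℝ) : ℂ) * wL x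
          + grad wL x i = 0)
        ∧ wL x / ((c₀ x) ^ 2 : ℂ)
            + (∑ j, ((-(gradR φ₀ x j) / (c₀ x) ^ 2 + alphaRho ρ₀ x j / 2 : ℝ) : ℂ) * uL x j)
            + divC uL x = (Real.sqrt (ρ₀ x) : ℂ) * f x)
      ∧ (∀ x ∈ frontier Ω,
          wL x - ∑ j, (gradR φ₀ x j : ℂ) * uL x j = 0) ) := by
  subst huL hwL
  have key : ∀ x ∈ Ω ∪ frontier Ω, ∃ s : ℂ, s ≠ 0 ∧ (Real.sqrt (ρ₀ x) : ℂ) = s ∧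
      (ρ₀ x : ℂ) = s ^ 2 := by
    intro x hx
    refine ⟨_, ?_, rfl, ?_⟩
    · exact_mod_cast (Real.sqrt_pos.2 (hρpos x hx)).ne'
    · exact_mod_cast (Real.sq_sqrt (hρpos x hx).le).symm
  refine and_congr (forall₂_congr fun x hx => and_congr (forall_congr' fun i => ?_) ?_)
    (forall₂_congr fun x hx => ?_)
  · obtain ⟨s, hs, h1, h2⟩ := key x (Or.inl hx)
    have hcx : (c₀ x : ℂ) ≠ 0 := by exact_mod_cast hc x (Or.inl hx)
    rw [← mul_eq_zero_iff_left hs (b := _ + grad (fun y => δp y / (Real.sqrt (ρ₀ y) : ℂ)) x i)]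
    refine Eq.congr ?_ rfl
    simp only [grad]
    rw [grad_div_aux ρ₀ x (hρdiff x (Or.inl hx)) (hρpos x (Or.inl hx)) δp (hδp x hx)]
    simp only [alphaRho, gradR, Fin.sum_univ_three]
    push_cast
    rw [h1, h2]
    field_simp
    ring
  · obtain ⟨s, hs, h1, h2⟩ := key x (Or.inl hx)
    have hcx : (c₀ x : ℂ) ≠ 0 := by exact_mod_cast hc x (Or.inl hx)
    have hd : ∀ j, DifferentiableAt ℝ (fun y => ξ y j) x := differentiableAt_pi.1 (hξ x hx)
    rw [h1, ← mul_right_inj' hs]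
    refine Eq.congr ?_ rfl
    simp only [divC]
    simp only [fun j => grad_mul_aux ρ₀ x (hρdiff x (Or.inl hx)) (hρpos x (Or.inl hx)) _ (hd j)]
    simp only [alphaRho, gradR, Fin.sum_univ_three]
    push_cast
    rw [h1, h2]
    field_simp
    ring
  · obtain ⟨s, hs, h1, h2⟩ := key x (Or.inr hx)
    rw [← mul_eq_zero_iff_left hs (b := δp x / _ - _)]
    refine Eq.congr ?_ rfl
    simp only [Fin.sum_univ_three]
    rw [h1, h2]
    field_simp
end

section
/- Let Ω ⊆ ℝ³ be open with topological boundary ∂Ω, let ρ₀, c₀, φ₀ : ℝ³ → ℝ with ρ₀ and c₀ differentiable and strictly positive on Ω ∪ ∂Ω, φ₀ differentiable, and let ω > 0, γ ≥ 0 be real and f : ℝ³ → ℂ. Let ξ : ℝ³ → ℂ³ and δp : ℝ³ → ℂ be differentiable on Ω, and set u_c := c₀ √ρ₀ ξ and w_c := δp/(c₀ √ρ₀). Then the following are equivalent: (a) at every x ∈ Ω, ρ₀ [ (−ω² − 2iωγ) ξ + ((α_ρ − ∇φ₀/c₀²)·ξ) ∇φ₀ ] + (δp/c₀²) ∇φ₀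 + ∇δp = 0 and δp/(ρ₀ c₀²) − (ξ·∇φ₀)/c₀² + div ξ = f, and at every x ∈ ∂Ω, δp − ρ₀ (ξ·∇φ₀) = 0; (b) at every x ∈ Ω, ((−ω² − 2iωγ)/c₀²) u_c + (1/c₀²) ((α_ρ − ∇φ₀/c₀²)·u_c) ∇φ₀ + (∇φ₀/c₀² − α_ρ/2 − α_c) w_c + ∇w_c = 0 and w_c + u_c·(−∇φ₀/c₀² + α_ρ/2 + α_c) + div u_c = c₀ √ρ₀ f, and at every x ∈ ∂Ω, w_c − u_c·∇φ₀/c₀² = 0. Here α_ρ = −∇ρ₀/ρ₀ and α_c = −∇c₀/c₀. -/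
/-- Inverse scale-height vector `α_g = -∇g/g` of a positive scalar background function. -/
noncomputable def alphaOf (g : (Fin 3 → ℝ) → ℝ) (x : Fin 3 → ℝ) : Fin 3 → ℝ :=
  fun i => -(gradR g x i) / g x

/-- derivative of the scaling factor, as a complex-valued function -/
lemma aux_m (ρ c : (Fin 3 → ℝ) → ℝ) (x : Fin 3 → ℝ) (hρ : DifferentiableAt ℝ ρ x)
    (hp : 0 < ρ x) (hc : DifferentiableAt ℝ c x) (v : Fin 3 → ℝ) :
    DifferentiableAt ℝ (fun y => ((c y * Real.sqrt (ρ y) : ℝ) : ℂ)) x ∧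
    fderiv ℝ (fun y => ((c y * Real.sqrt (ρ y) : ℝ) : ℂ)) x v =
      ((c x * (fderiv ℝ ρ x v / (2 * Real.sqrt (ρ x))) + Real.sqrt (ρ x) * fderiv ℝ c x v : ℝ) : ℂ)
      := by
  have h1 := hc.hasFDerivAt.mul (hρ.hasFDerivAt.sqrt hp.ne')
  have h2 := Complex.ofRealCLM.hasFDerivAt.comp x h1
  have h3 : HasFDerivAt (fun y => ((c y * Real.sqrt (ρ y) : ℝ) : ℂ)) _ x := h2
  refine ⟨h3.differentiableAt, ?_⟩
  rw [h3.fderiv]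
  simp
  left
  ring

theorem stmt6 (Ω : Set (Fin 3 → ℝ)) (hΩ : IsOpen Ω)
    (ρ₀ c₀ φ₀ : (Fin 3 → ℝ) → ℝ)
    (hρdiff : ∀ x ∈ Ω ∪ frontier Ω, DifferentiableAt ℝ ρ₀ x)
    (hρpos : ∀ x ∈ Ω ∪ frontier Ω, 0 < ρ₀ x)
    (hcdiff : ∀ x ∈ Ω ∪ frontier Ω, DifferentiableAt ℝ c₀ x)
    (hcpos : ∀ x ∈ Ω ∪ frontier Ω, 0 < c₀ x)
    (hφ : Differentiable ℝ φ₀)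
    (ω γ : ℝ) (hω : 0 < ω) (hγ : 0 ≤ γ)
    (f : (Fin 3 → ℝ) → ℂ)
    (ξ : (Fin 3 → ℝ) → Fin 3 → ℂ) (δp : (Fin 3 → ℝ) → ℂ)
    (hξ : ∀ x ∈ Ω, DifferentiableAt ℝ ξ x)
    (hδp : ∀ x ∈ Ω, DifferentiableAt ℝ δp x)
    (uc : (Fin 3 → ℝ) → Fin 3 → ℂ) (wc : (Fin 3 → ℝ) → ℂ)
    (huc : uc = fun y => fun i => ((c₀ y * Real.sqrt (ρ₀ y) : ℝ) : ℂ) * ξ y i)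
    (hwc : wc = fun y => δp y / ((c₀ y * Real.sqrt (ρ₀ y) : ℝ) : ℂ)) :
    -- (a) original system with vacuum boundary condition
    ( (∀ x ∈ Ω,
        (∀ i, (ρ₀ x : ℂ) *
            ( (-(ω : ℂ) ^ 2 - 2 * Complex.I * ω * γ) * ξ x i
              + (∑ j, ((alphaOf ρ₀ x j - gradR φ₀ x j / (c₀ x) ^ 2 : ℝ) : ℂ) * ξ x j)
                  * (gradR φ₀ x i : ℂ) )
          + (δp x / ((c₀ x) ^ 2 : ℂ)) * (gradR φ₀ x i : ℂ)
          + grad δp x i = 0)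
        ∧ δp x / ((ρ₀ x : ℂ) * ((c₀ x) ^ 2 : ℂ))
            - (∑ j, (gradR φ₀ x j : ℂ) * ξ x j) / ((c₀ x) ^ 2 : ℂ)
            + divC ξ x = f x)
      ∧ (∀ x ∈ frontier Ω,
          δp x - (ρ₀ x : ℂ) * ∑ j, (gradR φ₀ x j : ℂ) * ξ x j = 0) )
    ↔
    -- (b) Liouville-c system with its boundary condition
    ( (∀ x ∈ Ω,
        (∀ i, ((-(ω : ℂ) ^ 2 - 2 * Complex.I * ω * γ) / ((c₀ x) ^ 2 : ℂ)) * uc x i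
          + (1 / ((c₀ x) ^ 2 : ℂ))
              * (∑ j, ((alphaOf ρ₀ x j - gradR φ₀ x j / (c₀ x) ^ 2 : ℝ) : ℂ) * uc x j)
              * (gradR φ₀ x i : ℂ)
          + ((gradR φ₀ x i / (c₀ x) ^ 2 - alphaOf ρ₀ x i / 2 - alphaOf c₀ x i : ℝ) : ℂ) * wc x
          + grad wc x i = 0)
        ∧ wc x
            + (∑ j, ((-(gradR φ₀ x j) / (c₀ x) ^ 2 + alphaOf ρ₀ x j / 2
                        + alphaOf c₀ x j : ℝ) : ℂ) * uc x j)
            + divC uc x = ((c₀ x * Real.sqrt (ρ₀ x) : ℝ) : ℂ) * f x)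
      ∧ (∀ x ∈ frontier Ω,
          wc x - ∑ j, ((gradR φ₀ x j / (c₀ x) ^ 2 : ℝ) : ℂ) * uc x j = 0) ) := by
  have key : ∀ x ∈ Ω ∪ frontier Ω, ∃ s : ℝ, s ≠ 0 ∧ Real.sqrt (ρ₀ x) = s ∧ ρ₀ x = s ^ 2 := by
    intro x hx
    exact ⟨_, (Real.sqrt_pos.2 (hρpos x hx)).ne', rfl, (Real.sq_sqrt (hρpos x hx).le).symm⟩
  refine and_congr (forall₂_congr fun x hx => and_congr (forall_congr' fun i => ?_) ?_)
    (forall₂_congr fun x hx => ?_)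
  · have hx' : x ∈ Ω ∪ frontier Ω := Or.inl hx
    obtain ⟨s, hs, hsq, hρs⟩ := key x hx'
    have hc := (hcpos x hx').ne'
    obtain ⟨hmd, hm⟩ := aux_m ρ₀ c₀ x (hρdiff x hx') (hρpos x hx') (hcdiff x hx') (Pi.single i 1)
    have hm0 : ((c₀ x * Real.sqrt (ρ₀ x) : ℝ) : ℂ) ≠ 0 := by
      rw [hsq]; exact_mod_cast mul_ne_zero hc hs
    have hwd : DifferentiableAt ℝ wc x := by
      rw [hwc]
      simp only [div_eq_mul_inv]
      exact (hδp x hx).fun_mul (hmd.fun_inv hm0)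
    have hev : δp =ᶠ[nhds x] fun y => wc y * ((c₀ y * Real.sqrt (ρ₀ y) : ℝ) : ℂ) := by
      filter_upwards [hΩ.mem_nhds hx] with y hy
      have hy' : y ∈ Ω ∪ frontier Ω := Or.inl hy
      have : ((c₀ y * Real.sqrt (ρ₀ y) : ℝ) : ℂ) ≠ 0 := by
        exact_mod_cast (mul_pos (hcpos y hy') (Real.sqrt_pos.2 (hρpos y hy'))).ne'
      rw [hwc]
      field_simp
    have hg : grad δp x i = wc x * fderiv ℝ (fun y => ((c₀ y * Real.sqrt (ρ₀ y) : ℝ) : ℂ)) x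
        (Pi.single i 1) + ((c₀ x * Real.sqrt (ρ₀ x) : ℝ) : ℂ) * grad wc x i := by
      unfold grad
      rw [hev.fderiv_eq, fderiv_fun_mul hwd hmd]
      simp
    have hδ : δp x = wc x * ((c₀ x * Real.sqrt (ρ₀ x) : ℝ) : ℂ) := hev.eq_of_nhds
    have hu : ∀ j, uc x j = ((c₀ x * Real.sqrt (ρ₀ x) : ℝ) : ℂ) * ξ x j := by
      intro j; rw [huc]
    rw [hg, hm, hδ]
    simp only [hu, Fin.sum_univ_three, alphaOf]
    have hr : fderiv ℝ ρ₀ x (Pi.single i 1) = gradR ρ₀ x i := rfl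
    have hr' : fderiv ℝ c₀ x (Pi.single i 1) = gradR c₀ x i := rfl
    rw [hr, hr']
    rw [hsq] at hm0 ⊢
    rw [hρs]
    conv_rhs => rw [← mul_right_inj' hm0, mul_zero]
    have hsC : (s : ℂ) ≠ 0 := by exact_mod_cast hs
    have hcC : (c₀ x : ℂ) ≠ 0 := by exact_mod_cast hc
    refine Eq.congr ?_ rfl
    push_cast
    field_simp
    ring
  · have hx' : x ∈ Ω ∪ frontier Ω := Or.inl hx
    obtain ⟨s, hs, hsq, hρs⟩ := key x hx'
    have hc := (hcpos x hx').ne'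
    have hm := fun i => aux_m ρ₀ c₀ x (hρdiff x hx') (hρpos x hx') (hcdiff x hx') (Pi.single i 1)
    have hm0 : ((c₀ x * Real.sqrt (ρ₀ x) : ℝ) : ℂ) ≠ 0 := by
      rw [hsq]; exact_mod_cast mul_ne_zero hc hs
    have hd : ∀ i, fderiv ℝ (fun y => uc y i) x (Pi.single i 1) =
        ((c₀ x * Real.sqrt (ρ₀ x) : ℝ) : ℂ) * fderiv ℝ (fun y => ξ y i) x (Pi.single i 1) +
        ξ x i * ((c₀ x * (gradR ρ₀ x i / (2 * Real.sqrt (ρ₀ x)))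
          + Real.sqrt (ρ₀ x) * gradR c₀ x i : ℝ) : ℂ) := by
      intro i
      have := (hm i).2
      rw [huc]
      dsimp only
      rw [fderiv_fun_mul (hm i).1 (differentiableAt_pi.1 (hξ x hx) i)]
      simp only [ContinuousLinearMap.add_apply, ContinuousLinearMap.smul_apply, this, smul_eq_mul]
      rfl
    have hu : ∀ j, uc x j = ((c₀ x * Real.sqrt (ρ₀ x) : ℝ) : ℂ) * ξ x j := by
      intro j; rw [huc]
    have hw : wc x = δp x / ((c₀ x * Real.sqrt (ρ₀ x) : ℝ) : ℂ) := by rw [hwc]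
    simp only [divC, hd, hw, hu, Fin.sum_univ_three, alphaOf]
    rw [hsq] at hm0 ⊢
    rw [hρs]
    rw [← mul_right_inj' hm0]
    have hsC : (s : ℂ) ≠ 0 := by exact_mod_cast hs
    have hcC : (c₀ x : ℂ) ≠ 0 := by exact_mod_cast hc
    refine Eq.congr ?_ rfl
    push_cast
    field_simp
    ring
  · have hx' : x ∈ Ω ∪ frontier Ω := Or.inr hx
    obtain ⟨s, hs, hsq, hρs⟩ := key x hx'
    have hc := (hcpos x hx').ne'
    have hsC : (s : ℂ) ≠ 0 := by exact_mod_cast hs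
    have hcC : (c₀ x : ℂ) ≠ 0 := by exact_mod_cast hc
    have hm0 : ((c₀ x * s : ℝ) : ℂ) ≠ 0 := by exact_mod_cast mul_ne_zero hc hs
    simp only [huc, hwc, Fin.sum_univ_three, hsq]
    rw [hρs]
    conv_rhs => rw [← mul_right_inj' hm0, mul_zero]
    refine Eq.congr ?_ rfl
    push_cast
    field_simp
end

section
/- Let Ω ⊆ ℝ³ be open, let c₀ : ℝ³ → ℝ be differentiable and strictly positive on Ω, and let u_L : ℝ³ → ℂ³ and w_L : ℝ³ → ℂ be differentiable on Ω. Define u_c := c₀ u_L and w_c := w_L/c₀. Then, with background data ρ₀, φ₀, frequency ω, attenuation γ and source f as in the stellar oscillation equations, (u_L, w_L) satisfies the Liouville system [(−ω² − 2iωγ) u_L + ((α_ρ − ∇φ₀/c₀²)·u_L) ∇φ₀ + (∇φ₀/c₀² − α_ρ/2) w_L + ∇w_L = 0 and w_L/c₀² + u_L·(−∇φ₀/c₀² + α_ρ/2) + div u_L = √ρ₀ f] at every point of Ω if and only if (u_c, w_c) satisfies the Liouville-c system [((−ω² − 2iωγ)/c₀²) u_c + (1/c₀²)((α_ρ − ∇φ₀/c₀²)·u_c)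 ∇φ₀ + (∇φ₀/c₀² − α_ρ/2 − α_c) w_c + ∇w_c = 0 and w_c + u_c·(−∇φ₀/c₀² + α_ρ/2 + α_c) + div u_c = c₀ √ρ₀ f] at every point of Ω, where α_ρ = −∇ρ₀/ρ₀ and α_c = −∇c₀/c₀. -/
/-- Partial derivatives of a complex product with a real factor. -/
theorem aux_mul (c : (Fin 3 → ℝ) → ℝ) (g : (Fin 3 → ℝ) → ℂ) (x v : Fin 3 → ℝ)
    (hc : DifferentiableAt ℝ c x) (hg : DifferentiableAt ℝ g x) :
    fderiv ℝ (fun y => (c y : ℂ) * g y) x v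
      = (c x : ℂ) * fderiv ℝ g x v + (fderiv ℝ c x v : ℂ) * g x := by
  have h := (hc.hasFDerivAt.smul hg.hasFDerivAt).fderiv
  have e : (fun y => (c y : ℂ) * g y) = c • g := by
    funext y; simp
  rw [e, h]
  simp

/-- Quotient version of the product rule. -/
theorem aux_div (c : (Fin 3 → ℝ) → ℝ) (g : (Fin 3 → ℝ) → ℂ) (x v : Fin 3 → ℝ)
    (hc : DifferentiableAt ℝ c x) (hc0 : c x ≠ 0) (hg : DifferentiableAt ℝ g x) :
    fderiv ℝ (fun y => g y / (c y : ℂ)) x v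
      = fderiv ℝ g x v / (c x : ℂ) - (fderiv ℝ c x v : ℂ) * g x / (c x : ℂ) ^ 2 := by
  have e : (fun y => g y / (c y : ℂ)) = (fun y => (((c y)⁻¹ : ℝ) : ℂ) * g y) := by
    funext y; push_cast; ring
  have hi := (hasDerivAt_inv hc0).comp_hasFDerivAt x hc.hasFDerivAt
  have hi' : HasFDerivAt (fun y => (c y)⁻¹) (-(c x ^ 2)⁻¹ • fderiv ℝ c x) x := hi
  rw [e, aux_mul _ g x v hi'.differentiableAt hg, hi'.fderiv]
  simp
  ring

theorem stmt7 (Ω : Set (Fin 3 → ℝ)) (hΩ : IsOpen Ω)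
    (ρ₀ c₀ φ₀ : (Fin 3 → ℝ) → ℝ)
    (hρdiff : Differentiable ℝ ρ₀) (hρpos : ∀ x, 0 < ρ₀ x)
    (hcdiff : ∀ x ∈ Ω, DifferentiableAt ℝ c₀ x) (hcpos : ∀ x ∈ Ω, 0 < c₀ x)
    (hφ : Differentiable ℝ φ₀)
    (ω γ : ℝ) (hω : 0 < ω) (hγ : 0 ≤ γ)
    (f : (Fin 3 → ℝ) → ℂ)
    (uL : (Fin 3 → ℝ) → Fin 3 → ℂ) (wL : (Fin 3 → ℝ) → ℂ)
    (huL : ∀ x ∈ Ω, DifferentiableAt ℝ uL x)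
    (hwL : ∀ x ∈ Ω, DifferentiableAt ℝ wL x)
    (uc : (Fin 3 → ℝ) → Fin 3 → ℂ) (wc : (Fin 3 → ℝ) → ℂ)
    (huc : uc = fun y => fun i => (c₀ y : ℂ) * uL y i)
    (hwc : wc = fun y => wL y / (c₀ y : ℂ)) :
    -- Liouville system
    (∀ x ∈ Ω,
      (∀ i, (-(ω : ℂ) ^ 2 - 2 * Complex.I * ω * γ) * uL x i
        + (∑ j, ((alphaOf ρ₀ x j - gradR φ₀ x j / (c₀ x) ^ 2 : ℝ) : ℂ) * uL x j)
            * (gradR φ₀ x i : ℂ)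
        + ((gradR φ₀ x i / (c₀ x) ^ 2 - alphaOf ρ₀ x i / 2 : ℝ) : ℂ) * wL x
        + grad wL x i = 0)
      ∧ wL x / ((c₀ x) ^ 2 : ℂ)
          + (∑ j, ((-(gradR φ₀ x j) / (c₀ x) ^ 2 + alphaOf ρ₀ x j / 2 : ℝ) : ℂ) * uL x j)
          + divC uL x = (Real.sqrt (ρ₀ x) : ℂ) * f x)
    ↔
    -- Liouville-c system
    (∀ x ∈ Ω,
      (∀ i, ((-(ω : ℂ) ^ 2 - 2 * Complex.I * ω * γ) / ((c₀ x) ^ 2 : ℂ)) * uc x i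
        + (1 / ((c₀ x) ^ 2 : ℂ))
            * (∑ j, ((alphaOf ρ₀ x j - gradR φ₀ x j / (c₀ x) ^ 2 : ℝ) : ℂ) * uc x j)
            * (gradR φ₀ x i : ℂ)
        + ((gradR φ₀ x i / (c₀ x) ^ 2 - alphaOf ρ₀ x i / 2 - alphaOf c₀ x i : ℝ) : ℂ) * wc x
        + grad wc x i = 0)
      ∧ wc x
          + (∑ j, ((-(gradR φ₀ x j) / (c₀ x) ^ 2 + alphaOf ρ₀ x j / 2
                      + alphaOf c₀ x j : ℝ) : ℂ) * uc x j)
          + divC uc x = ((c₀ x * Real.sqrt (ρ₀ x) : ℝ) : ℂ) * f x) := by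
  refine forall₂_congr fun x hx => ?_
  have hc := hcdiff x hx
  have hc0 : c₀ x ≠ 0 := (hcpos x hx).ne'
  have hC : (c₀ x : ℂ) ≠ 0 := by exact_mod_cast hc0
  have hu : ∀ i, DifferentiableAt ℝ (fun y => uL y i) x :=
    differentiableAt_pi.1 (huL x hx)
  subst huc hwc
  refine and_congr (forall_congr' fun i => ?_) ?_
  · rw [← mul_right_inj' (inv_ne_zero hC), mul_zero]
    refine Eq.congr ?_ rfl
    simp only [grad]
    rw [aux_div c₀ wL x _ hc hc0 (hwL x hx)]
    simp only [Fin.sum_univ_three]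
    have ha : ((alphaOf c₀ x i : ℝ) : ℂ) = - (fderiv ℝ c₀ x (Pi.single i 1) : ℂ) / c₀ x := by
      simp [alphaOf, gradR]
    push_cast
    rw [ha]
    field_simp
    ring
  · rw [← mul_right_inj' hC]
    have ha : ∀ j, ((alphaOf c₀ x j : ℝ) : ℂ)
        = - (fderiv ℝ c₀ x (Pi.single j 1) : ℂ) / c₀ x := by
      intro j
      simp [alphaOf, gradR]
    refine Eq.congr ?_ (by push_cast; ring)
    simp only [divC]
    simp only [aux_mul c₀ _ x _ hc (hu _)]
    simp only [Fin.sum_univ_three]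
    push_cast
    simp only [ha]
    field_simp
    ring
end

section
/- Let n, N be natural numbers, and for each e ∈ Fin n let d_e and m_e be natural numbers, A^e a d_e × d_e complex matrix that is invertible, C^e a d_e × m_e complex matrix, B^e an m_e × d_e complex matrix, L^e an m_e × m_e complex matrix, R_e an m_e × N complex matrix, and F^e ∈ ℂ^{d_e}. Define K := Σ_e R_eᵀ (L^e − B^e (A^e)⁻¹ C^e) R_e and S := −Σ_e R_eᵀ B^e (A^e)⁻¹ F^e. Then a family of vectors (U^e ∈ ℂ^{d_e})_{e ∈ Fin n} together with Λ ∈ ℂ^N satisfies the coupled system A^e U^e + C^e (R_e Λ) = F^e for every e and Σ_e R_eᵀ (B^e U^e + L^e (R_e Λ)) = 0 if and only if Λ satisfies the condensed system K Λ = S and U^e = (A^e)⁻¹ (F^e − C^e (R_e Λ)) for every e. -/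
open Matrix

theorem stmt9 (n N : ℕ) (d m : Fin n → ℕ)
    (A : ∀ e : Fin n, Matrix (Fin (d e)) (Fin (d e)) ℂ)
    (hA : ∀ e, IsUnit (A e))
    (C : ∀ e : Fin n, Matrix (Fin (d e)) (Fin (m e)) ℂ)
    (B : ∀ e : Fin n, Matrix (Fin (m e)) (Fin (d e)) ℂ)
    (L : ∀ e : Fin n, Matrix (Fin (m e)) (Fin (m e)) ℂ)
    (R : ∀ e : Fin n, Matrix (Fin (m e)) (Fin N) ℂ)
    (F : ∀ e : Fin n, Fin (d e) → ℂ)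
    (K : Matrix (Fin N) (Fin N) ℂ)
    (hK : K = ∑ e, (R e)ᵀ * (L e - B e * (A e)⁻¹ * C e) * R e)
    (S : Fin N → ℂ)
    (hS : S = -∑ e, (R e)ᵀ *ᵥ (B e *ᵥ ((A e)⁻¹ *ᵥ F e)))
    (U : ∀ e : Fin n, Fin (d e) → ℂ) (Λ : Fin N → ℂ) :
    ((∀ e, A e *ᵥ U e + C e *ᵥ (R e *ᵥ Λ) = F e) ∧
      ∑ e, (R e)ᵀ *ᵥ (B e *ᵥ U e + L e *ᵥ (R e *ᵥ Λ)) = 0)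
    ↔
    (K *ᵥ Λ = S ∧ ∀ e, U e = (A e)⁻¹ *ᵥ (F e - C e *ᵥ (R e *ᵥ Λ))) := by
  have h1 : ∀ e, (A e *ᵥ U e + C e *ᵥ (R e *ᵥ Λ) = F e) ↔
      U e = (A e)⁻¹ *ᵥ (F e - C e *ᵥ (R e *ᵥ Λ)) := by
    intro e
    have hd : IsUnit (A e).det := (Matrix.isUnit_iff_isUnit_det _).mp (hA e)
    constructor
    · intro h
      rw [← h, add_sub_cancel_right, Matrix.mulVec_mulVec, Matrix.nonsing_inv_mul _ hd,
        Matrix.one_mulVec]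
    · intro h
      rw [h, Matrix.mulVec_mulVec, Matrix.mul_nonsing_inv _ hd, Matrix.one_mulVec,
        sub_add_cancel]
  rw [forall_congr' h1, and_comm]
  refine and_congr_left fun hU => ?_
  have h2 : ∑ e, (R e)ᵀ *ᵥ (B e *ᵥ U e + L e *ᵥ (R e *ᵥ Λ)) = K *ᵥ Λ - S := by
    rw [hK, hS, sub_neg_eq_add, Matrix.sum_mulVec, ← Finset.sum_add_distrib]
    refine Finset.sum_congr rfl fun e _ => ?_
    rw [hU e]
    simp only [← Matrix.mulVec_mulVec, Matrix.mulVec_sub, Matrix.mulVec_add, Matrix.sub_mulVec]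
    abel
  rw [h2, sub_eq_zero]
end

section
/- Let n, N be natural numbers, and for each e ∈ Fin n let d_e and m_e be natural numbers, A^e a d_e × d_e complex matrix that is invertible, C^e a d_e × m_e complex matrix, B^e an m_e × d_e complex matrix, L^e an m_e × m_e complex matrix, and R_e an m_e × N complex matrix. Suppose the condensed matrix K := Σ_e R_eᵀ (L^e − B^e (A^e)⁻¹ C^e) R_e is invertible. Then for every family of vectors (F^e ∈ ℂ^{d_e})_{e ∈ Fin n} there exists a unique pair of a family (U^e ∈ ℂ^{d_e})_{e ∈ Fin n} and a vector Λ ∈ ℂ^N satisfying A^e U^e + C^e (R_e Λ) = F^e for every e and Σ_e R_eᵀ (B^e U^e + L^e (R_e Λ)) = 0, and it is given by Λ = K⁻¹ S with S := −Σ_e R_eᵀ B^e (A^e)⁻¹ F^e and U^e = (A^e)⁻¹ (F^e − C^e (R_e Λ)). -/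
open Matrix

theorem stmt10 (n N : ℕ) (d m : Fin n → ℕ)
    (A : ∀ e : Fin n, Matrix (Fin (d e)) (Fin (d e)) ℂ)
    (hA : ∀ e, IsUnit (A e))
    (C : ∀ e : Fin n, Matrix (Fin (d e)) (Fin (m e)) ℂ)
    (B : ∀ e : Fin n, Matrix (Fin (m e)) (Fin (d e)) ℂ)
    (L : ∀ e : Fin n, Matrix (Fin (m e)) (Fin (m e)) ℂ)
    (R : ∀ e : Fin n, Matrix (Fin (m e)) (Fin N) ℂ)
    (K : Matrix (Fin N) (Fin N) ℂ)
    (hK : K = ∑ e, (R e)ᵀ * (L e - B e * (A e)⁻¹ * C e) * R e)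
    (hKunit : IsUnit K) :
    ∀ F : ∀ e : Fin n, Fin (d e) → ℂ, ∀ S : Fin N → ℂ,
      S = -∑ e, (R e)ᵀ *ᵥ (B e *ᵥ ((A e)⁻¹ *ᵥ F e)) →
      (∃! p : (∀ e : Fin n, Fin (d e) → ℂ) × (Fin N → ℂ),
        (∀ e, A e *ᵥ p.1 e + C e *ᵥ (R e *ᵥ p.2) = F e) ∧
        ∑ e, (R e)ᵀ *ᵥ (B e *ᵥ p.1 e + L e *ᵥ (R e *ᵥ p.2)) = 0) ∧
      (∀ p : (∀ e : Fin n, Fin (d e) → ℂ) × (Fin N → ℂ),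
        ((∀ e, A e *ᵥ p.1 e + C e *ᵥ (R e *ᵥ p.2) = F e) ∧
          ∑ e, (R e)ᵀ *ᵥ (B e *ᵥ p.1 e + L e *ᵥ (R e *ᵥ p.2)) = 0) →
        p.2 = K⁻¹ *ᵥ S ∧ ∀ e, p.1 e = (A e)⁻¹ *ᵥ (F e - C e *ᵥ (R e *ᵥ p.2))) := by
  intro F S hS
  have hAdet : ∀ e, IsUnit (A e).det := fun e => (Matrix.isUnit_iff_isUnit_det _).1 (hA e)
  have hKdet : IsUnit K.det := (Matrix.isUnit_iff_isUnit_det _).1 hKunit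
  -- the condensed residual
  have key : ∀ x : Fin N → ℂ,
      ∑ e, (R e)ᵀ *ᵥ (B e *ᵥ ((A e)⁻¹ *ᵥ (F e - C e *ᵥ (R e *ᵥ x))) + L e *ᵥ (R e *ᵥ x))
        = K *ᵥ x - S := by
    intro x
    rw [hS, hK, sub_neg_eq_add, Matrix.sum_mulVec, ← Finset.sum_add_distrib]
    refine Finset.sum_congr rfl fun e _ => ?_
    simp only [← Matrix.mulVec_mulVec, Matrix.mulVec_add, Matrix.mulVec_sub, Matrix.sub_mulVec]
    abel
  -- local solvability
  have hloc : ∀ (e : Fin n) (u : Fin (d e) → ℂ) (x : Fin N → ℂ),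
      A e *ᵥ u + C e *ᵥ (R e *ᵥ x) = F e ↔ u = (A e)⁻¹ *ᵥ (F e - C e *ᵥ (R e *ᵥ x)) := by
    intro e u x
    constructor
    · intro h
      rw [← h, add_sub_cancel_right, Matrix.mulVec_mulVec, Matrix.nonsing_inv_mul _ (hAdet e),
        Matrix.one_mulVec]
    · intro h
      rw [h, Matrix.mulVec_mulVec, Matrix.mul_nonsing_inv _ (hAdet e), Matrix.one_mulVec,
        sub_add_cancel]
  have hform : ∀ p : (∀ e : Fin n, Fin (d e) → ℂ) × (Fin N → ℂ),
        ((∀ e, A e *ᵥ p.1 e + C e *ᵥ (R e *ᵥ p.2) = F e) ∧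
          ∑ e, (R e)ᵀ *ᵥ (B e *ᵥ p.1 e + L e *ᵥ (R e *ᵥ p.2)) = 0) →
        p.2 = K⁻¹ *ᵥ S ∧ ∀ e, p.1 e = (A e)⁻¹ *ᵥ (F e - C e *ᵥ (R e *ᵥ p.2)) := by
    rintro ⟨u, x⟩ ⟨h1, h2⟩
    have hu : ∀ e, u e = (A e)⁻¹ *ᵥ (F e - C e *ᵥ (R e *ᵥ x)) := fun e => (hloc e _ _).1 (h1 e)
    refine ⟨?_, hu⟩
    have h3 := key x
    simp only [← hu] at h3
    have h4 : K *ᵥ x = S := sub_eq_zero.1 (h3.symm.trans h2)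
    change x = _
    rw [← h4, Matrix.mulVec_mulVec, Matrix.nonsing_inv_mul _ hKdet, Matrix.one_mulVec]
  refine ⟨⟨(fun e => (A e)⁻¹ *ᵥ (F e - C e *ᵥ (R e *ᵥ (K⁻¹ *ᵥ S))), K⁻¹ *ᵥ S),
    ⟨fun e => (hloc e _ _).2 rfl, ?_⟩, ?_⟩, hform⟩
  · refine (key _).trans ?_
    rw [Matrix.mulVec_mulVec, Matrix.mul_nonsing_inv _ hKdet, Matrix.one_mulVec, sub_self]
  · intro q hq
    obtain ⟨h1, h2⟩ := hform q hq
    refine Prod.ext (funext fun e => ?_) h1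
    rw [h2 e, h1]
end

section
/- Let Ω ⊆ ℝ³ be open, let R be a real orthogonal 3×3 matrix with R ''Ω = Ω (Ω is invariant under R), and let A : ℝ³ → Matrix (Fin 3) (Fin 3) ℂ, β : ℝ³ → ℂ³, ϱ, f : ℝ³ → ℂ satisfy the equivariance conditions A(R x) = R A(x) Rᵀ (with R regarded as a complex matrix), β(R x) = R β(x), ϱ(R x) = ϱ(x) and f(R x) = f(x) for all x ∈ Ω. If u : ℝ³ → ℂ³ and w : ℝ³ → ℂ are differentiable on Ω and satisfy A u + β w + ∇w = 0 and div u − β·u + ϱ w = f at every point of Ω, then the transformed fields ũ(x) := Rᵀ u(R x) and w̃(x) := w(R x) are differentiable on Ω and satisfy the same system A ũ + β w̃ + ∇w̃ = 0 and div ũ − β·ũ + ϱ w̃ = f at every point of Ω. -/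
open Matrix

lemma mulVec_diff (R : Matrix (Fin 3) (Fin 3) ℝ) (x : Fin 3 → ℝ) :
    HasFDerivAt (fun y => R *ᵥ y) (LinearMap.toContinuousLinearMap (Matrix.mulVecLin R)) x :=
  (LinearMap.toContinuousLinearMap (Matrix.mulVecLin R)).hasFDerivAt

lemma fderiv_expand (L : (Fin 3 → ℝ) →L[ℝ] ℂ) (v : Fin 3 → ℝ) :
    L v = ∑ k, (v k : ℂ) * L (Pi.single k 1) := by
  conv_lhs => rw [pi_eq_sum_univ' v, map_sum]
  refine Finset.sum_congr rfl fun k _ => ?_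
  rw [map_smul, Complex.real_smul]

lemma chain_rule (R : Matrix (Fin 3) (Fin 3) ℝ) (x : Fin 3 → ℝ) (g : (Fin 3 → ℝ) → ℂ)
    (hg : DifferentiableAt ℝ g (R *ᵥ x)) (i : Fin 3) :
    fderiv ℝ (fun y => g (R *ᵥ y)) x (Pi.single i 1)
      = ∑ k, (R k i : ℂ) * fderiv ℝ g (R *ᵥ x) (Pi.single k 1) := by
  have h := (HasFDerivAt.comp x hg.hasFDerivAt (mulVec_diff R x)).fderiv
  have h' : fderiv ℝ (fun y => g (R *ᵥ y)) x = _ := h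
  rw [h', ContinuousLinearMap.comp_apply, fderiv_expand]
  refine Finset.sum_congr rfl fun k _ => ?_
  simp

theorem stmt12 (Ω : Set (Fin 3 → ℝ)) (hΩ : IsOpen Ω)
    (R : Matrix (Fin 3) (Fin 3) ℝ)
    (hR : Rᵀ * R = 1 ∧ R * Rᵀ = 1)
    (hΩR : (fun x => R *ᵥ x) '' Ω = Ω)
    (A : (Fin 3 → ℝ) → Matrix (Fin 3) (Fin 3) ℂ)
    (β : (Fin 3 → ℝ) → Fin 3 → ℂ) (ϱ f : (Fin 3 → ℝ) → ℂ)
    (hAeq : ∀ x ∈ Ω, A (R *ᵥ x) = R.map Complex.ofReal * A x * (R.map Complex.ofReal)ᵀ)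
    (hβeq : ∀ x ∈ Ω, β (R *ᵥ x) = R.map Complex.ofReal *ᵥ β x)
    (hϱeq : ∀ x ∈ Ω, ϱ (R *ᵥ x) = ϱ x)
    (hfeq : ∀ x ∈ Ω, f (R *ᵥ x) = f x)
    (u : (Fin 3 → ℝ) → Fin 3 → ℂ) (w : (Fin 3 → ℝ) → ℂ)
    (hu : ∀ x ∈ Ω, DifferentiableAt ℝ u x)
    (hw : ∀ x ∈ Ω, DifferentiableAt ℝ w x)
    (hsys : ∀ x ∈ Ω,
      (∀ i, (A x *ᵥ u x) i + β x i * w x + grad w x i = 0) ∧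
      divC u x - (∑ i, β x i * u x i) + ϱ x * w x = f x) :
    (∀ x ∈ Ω, DifferentiableAt ℝ (fun y => (R.map Complex.ofReal)ᵀ *ᵥ u (R *ᵥ y)) x) ∧
    (∀ x ∈ Ω, DifferentiableAt ℝ (fun y => w (R *ᵥ y)) x) ∧
    (∀ x ∈ Ω,
      (∀ i, (A x *ᵥ ((R.map Complex.ofReal)ᵀ *ᵥ u (R *ᵥ x))) i
          + β x i * w (R *ᵥ x)
          + grad (fun y => w (R *ᵥ y)) x i = 0) ∧
      divC (fun y => (R.map Complex.ofReal)ᵀ *ᵥ u (R *ᵥ y)) x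
        - (∑ i, β x i * ((R.map Complex.ofReal)ᵀ *ᵥ u (R *ᵥ x)) i)
        + ϱ x * w (R *ᵥ x) = f x) := by
  have hmem : ∀ x ∈ Ω, R *ᵥ x ∈ Ω := fun x hx => hΩR ▸ Set.mem_image_of_mem _ hx
  set C := R.map Complex.ofReal with hC
  have hC1 : Cᵀ * C = 1 := by
    have := congrArg (fun M => M.map Complex.ofRealHom) hR.1
    simp only [Matrix.map_mul] at this
    rw [Matrix.map_one _ (map_zero _) (map_one _)] at this
    exact this
  have hC2 : C * Cᵀ = 1 := by
    have := congrArg (fun M => M.map Complex.ofRealHom) hR.2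
    simp only [Matrix.map_mul] at this
    rw [Matrix.map_one _ (map_zero _) (map_one _)] at this
    exact this
  have hdu : ∀ x ∈ Ω, DifferentiableAt ℝ (fun y => u (R *ᵥ y)) x := fun x hx =>
    DifferentiableAt.comp x (hu _ (hmem x hx)) (mulVec_diff R x).differentiableAt
  have hdw : ∀ x ∈ Ω, DifferentiableAt ℝ (fun y => w (R *ᵥ y)) x := fun x hx =>
    DifferentiableAt.comp x (hw _ (hmem x hx)) (mulVec_diff R x).differentiableAt
  have hduj : ∀ x ∈ Ω, ∀ j, DifferentiableAt ℝ (fun y => u (R *ᵥ y) j) x := fun x hx =>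
    differentiableAt_pi.1 (hdu x hx)
  refine ⟨fun x hx => ?_, hdw, fun x hx => ⟨?_, ?_⟩⟩
  · refine differentiableAt_pi.2 fun i => ?_
    simp only [Matrix.mulVec, dotProduct]
    exact DifferentiableAt.fun_sum fun j _ => (hduj x hx j).const_mul _
  · have h1 : A (R *ᵥ x) *ᵥ u (R *ᵥ x) + w (R *ᵥ x) • β (R *ᵥ x) + grad w (R *ᵥ x) = 0 := by
      ext i
      have := (hsys _ (hmem x hx)).1 i
      simpa [mul_comm] using this
    have hg : grad (fun y => w (R *ᵥ y)) x = Cᵀ *ᵥ grad w (R *ᵥ x) := by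
      ext i
      simp only [grad, chain_rule R x w (hw _ (hmem x hx)), Matrix.mulVec, dotProduct]
      rfl
    have h2 := congrArg (fun v => Cᵀ *ᵥ v) h1
    simp only [Matrix.mulVec_add, Matrix.mulVec_smul, ← hg, hAeq x hx, hβeq x hx,
      Matrix.mulVec_mulVec, Matrix.mulVec_zero, ← Matrix.mul_assoc, hC1, Matrix.one_mul,
      Matrix.one_mulVec] at h2
    intro i
    have h3 := congrFun h2 i
    rw [Matrix.mulVec_mulVec]
    simpa [mul_comm] using h3
  · have h1 := (hsys _ (hmem x hx)).2
    rw [hϱeq x hx, hfeq x hx, hβeq x hx] at h1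
    have hb : (∑ i, β x i * (Cᵀ *ᵥ u (R *ᵥ x)) i) = ∑ i, (C *ᵥ β x) i * u (R *ᵥ x) i := by
      change β x ⬝ᵥ (Cᵀ *ᵥ u (R *ᵥ x)) = (C *ᵥ β x) ⬝ᵥ u (R *ᵥ x)
      rw [Matrix.dotProduct_mulVec, Matrix.vecMul_transpose]
    have hd : divC (fun y => Cᵀ *ᵥ u (R *ᵥ y)) x = divC u (R *ᵥ x) := by
      have e : ∀ i, fderiv ℝ (fun y => (Cᵀ *ᵥ u (R *ᵥ y)) i) x (Pi.single i 1)
          = ∑ j, C j i * ∑ k, C k i * fderiv ℝ (fun y => u y j) (R *ᵥ x) (Pi.single k 1) := by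
        intro i
        have h : HasFDerivAt (fun y => (Cᵀ *ᵥ u (R *ᵥ y)) i)
            (∑ j, C j i • fderiv ℝ (fun y => u (R *ᵥ y) j) x) x := by
          simp only [Matrix.mulVec, dotProduct]
          exact HasFDerivAt.fun_sum fun j _ => (hduj x hx j).hasFDerivAt.const_mul _
        rw [h.fderiv, _root_.sum_apply]
        refine Finset.sum_congr rfl fun j _ => ?_
        rw [_root_.smul_apply, chain_rule R x (fun y => u y j)
          (differentiableAt_pi.1 (hu _ (hmem x hx)) j)]
        rfl
      have o : ∀ j k, ∑ i, C j i * C k i = if j = k then 1 else 0 := by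
        intro j k
        have := congrFun (congrFun hC2 j) k
        simpa [Matrix.mul_apply, Matrix.one_apply] using this
      simp only [divC, e, Finset.mul_sum, ← mul_assoc]
      rw [Finset.sum_comm]
      refine Finset.sum_congr rfl fun j _ => ?_
      rw [Finset.sum_comm]
      simp only [← Finset.sum_mul, o]
      simp
    rw [hd, hb]
    exact h1
end
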